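/- Let k be an uncountable algebraically closed field, let X and Y be integral schemes of finite type over k with dim X = dim Y (topological Krull dimension), and let f: X → Y be a dominant morphism of k-schemes. Suppose σ: X → X and τ: Y → Y are k-automorphisms such that f ∘ σ = τ ∘ f. Then (X, σ) has good dense orbits if and only if (Y, τ) has good dense orbits. -/

import Mathlib

open AlgebraicGeometry CategoryTheory CategoryTheory.Limits TopologicalSpace

universe u

namespace ThcrDM

variable {X : Scheme.{u}}

/-- The `n`-th iterate (`n : ℤ`) of an automorphism of a scheme, on points. -/
noncomputable def iter (σ : X ≅ X) : ℤ → X → X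
  | Int.ofNat n => (fun x => σ.hom.base x)^[n]
  | Int.negSucc n => (fun x => σ.inv.base x)^[n + 1]

/-- The σ-orbit `{σ^n(x) : n ∈ ℤ}` of a point `x`. -/
noncomputable def orbit (σ : X ≅ X) (x : X) : Set X :=
  Set.range fun n : ℤ => iter σ n x

/-- A subset `Z` is σ-invariant if `σ(Z) = Z`. -/
def SigmaInv (σ : X ≅ X) (Z : Set X) : Prop :=
  σ.hom.base '' Z = Z

/-- A σ-invariant closed subset is σ-irreducible if it admits no decomposition into two
σ-invariant closed subsets both properly contained in it. -/
def SigmaIrred (σ : X ≅ X) (Z : Set X) : Prop :=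
  IsClosed Z ∧ SigmaInv σ Z ∧
    ∀ Z₁ Z₂ : Set X, IsClosed Z₁ → IsClosed Z₂ → SigmaInv σ Z₁ → SigmaInv σ Z₂ →
      Z = Z₁ ∪ Z₂ → ¬(Z₁ ⊂ Z ∧ Z₂ ⊂ Z)

/-- `W` is a maximal σ-irreducible closed subset of `Z`, i.e. a maximal element, under
inclusion, of the set of proper σ-irreducible closed subsets of `Z`. -/
def MaxSigmaIrredIn (σ : X ≅ X) (Z W : Set X) : Prop :=
  SigmaIrred σ W ∧ W ⊂ Z ∧ ∀ W' : Set X, SigmaIrred σ W' → W' ⊂ Z → W ⊆ W' → W' = W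

/-- `(X, σ)` has good dense orbits if the set of points with dense σ-orbit is open. -/
def GoodDenseOrbits (σ : X ≅ X) : Prop :=
  IsOpen { x : X | Dense (orbit σ x) }

/-- `(X, σ)` is ordinary if for every σ-irreducible closed subset `Z`, the set of points of `Z`
whose σ-orbit is dense in `Z` is open in `Z` (in the subspace topology). -/
def Ordinary (σ : X ≅ X) : Prop :=
  ∀ Z : Set X, SigmaIrred σ Z →
    ∃ U : Set X, IsOpen U ∧ { z | z ∈ Z ∧ Z ⊆ closure (orbit σ z) } = U ∩ Z

/-- `(X, σ)` is countable-avoiding if every σ-irreducible closed subset has either finitely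
many or uncountably many maximal σ-irreducible closed subsets. -/
def CountableAvoiding (σ : X ≅ X) : Prop :=
  ∀ Z : Set X, SigmaIrred σ Z →
    { W : Set X | MaxSigmaIrredIn σ Z W }.Finite ∨
      ¬ { W : Set X | MaxSigmaIrredIn σ Z W }.Countable

/-- A subset `Z` has codimension one if every irreducible component of `Z` (i.e. every maximal
irreducible subset of `Z`) has coheight 1 in the poset of irreducible closed subsets of `X`. -/
def CodimOne (Z : Set X) : Prop :=
  ∀ T : IrreducibleCloseds X,
    Maximal (fun s : Set X => s ⊆ Z ∧ IsIrreducible s) ↑T → Order.coheight T = 1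

/-- Powers of an automorphism. -/
noncomputable def isoPow (σ : X ≅ X) : ℕ → (X ≅ X)
  | 0 => Iso.refl X
  | n + 1 => isoPow σ n ≪≫ σ

/-- The automorphism of the function field induced by an automorphism of an irreducible
scheme. -/
noncomputable def functionFieldAut [IrreducibleSpace X] (σ : X ≅ X) :
    X.functionField ⟶ X.functionField :=
  eqToHom (congrArg X.presheaf.stalk (genericPoint_eq_of_isOpenImmersion σ.hom).symm) ≫
    σ.hom.stalkMap (genericPoint X)

/-- The canonical map from the base ring into the function field of an irreducible
scheme over it. -/
noncomputable def constMap [IrreducibleSpace X] {k : CommRingCat.{u}} (p : X ⟶ Spec k) :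
    k ⟶ X.functionField :=
  haveI : Nonempty (⊤ : X.Opens) := ⟨⟨Classical.arbitrary X, trivial⟩⟩
  (Scheme.ΓSpecIso k).inv ≫ p.appTop ≫ X.germToFunctionField ⊤



lemma aux_dim_integral {R S : Type*} [CommRing R] [CommRing S] [Algebra R S]
    [Algebra.IsIntegral R S] [FaithfulSMul R S] : ringKrullDim S = ringKrullDim R := by
  apply le_antisymm
  · refine Order.krullDim_le_of_strictMono (PrimeSpectrum.comap (algebraMap R S)) ?_
    intro P Q h
    exact Ideal.IsIntegral.comap_lt_comap (R := R) (I := P.asIdeal) (J := Q.asIdeal) h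
  · refine iSup_le fun l => ?_
    obtain ⟨Q, -, hQ, hQ'⟩ := Ideal.exists_ideal_over_prime_of_isIntegral
      (S := S) l.head.asIdeal ⊥ (by
        rw [← RingHom.ker_eq_comap_bot,
          (RingHom.injective_iff_ker_eq_bot _).mp (FaithfulSMul.algebraMap_injective R S)]
        exact bot_le)
    have : Q.LiesOver (RelSeries.head l).asIdeal := ⟨hQ'.symm⟩
    obtain ⟨L, hL, -⟩ := Ideal.exists_ltSeries_of_hasGoingUp l Q
    rw [← hL]
    exact le_iSup (fun p : LTSeries (PrimeSpectrum S) => ((p.length : ℕ) : WithBot ℕ∞)) L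

lemma aux_dim_trdeg (k A : Type u) [Field k] [CommRing A] [IsDomain A] [Algebra k A]
    [Algebra.FiniteType k A] :
    ∃ n : ℕ, Algebra.trdeg k A = n ∧ ringKrullDim A = n := by
  obtain ⟨s, g, hg, hi⟩ := exists_integral_inj_algHom_of_fg k A
  let : Algebra (MvPolynomial (Fin s) k) A := g.toRingHom.toAlgebra
  have : IsScalarTower k (MvPolynomial (Fin s) k) A := IsScalarTower.of_algHom g
  have : Algebra.IsIntegral (MvPolynomial (Fin s) k) A := ⟨hi⟩
  have : FaithfulSMul (MvPolynomial (Fin s) k) A :=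
    (faithfulSMul_iff_algebraMap_injective _ _).mpr hg
  refine ⟨s, ?_, ?_⟩
  · rw [← trdeg_add_eq k (MvPolynomial (Fin s) k) (A := A), trdeg_eq_zero (R := MvPolynomial (Fin s) k),
      MvPolynomial.trdeg_of_isDomain]
    simp
  · rw [aux_dim_integral (R := MvPolynomial (Fin s) k),
      MvPolynomial.ringKrullDim_of_isNoetherianRing]
    simp

lemma aux_prime (k A B : Type u) [Field k] [CommRing A] [IsDomain A] [CommRing B] [IsDomain B]
    [Algebra k A] [Algebra k B] [Algebra A B] [IsScalarTower k A B] [FaithfulSMul A B]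
    (n : ℕ) (hA : Algebra.trdeg k A = n) (hB : Algebra.trdeg k B = n)
    (P : Ideal B) (hP : P.comap (algebraMap A B) = ⊥) : P = ⊥ := by
  have h := trdeg_add_eq k A (A := B)
  rw [hA, hB] at h
  have h0 : Algebra.trdeg A B = 0 := by
    have hlt : Algebra.trdeg A B < Cardinal.aleph0 := by
      refine lt_of_le_of_lt ?_ (Cardinal.natCast_lt_aleph0 (n := n))
      rw [← h]; exact le_add_self
    obtain ⟨m, hm⟩ := Cardinal.lt_aleph0.mp hlt
    rw [hm] at h ⊢
    norm_cast at h ⊢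
    omega
  have := trdeg_eq_zero_iff.mp h0
  by_contra hne
  obtain ⟨x, hx, hx0⟩ := P.ne_bot_iff.mp hne
  exact Ideal.comap_ne_bot_of_algebraic_mem hx0 hx (Algebra.IsAlgebraic.isAlgebraic x) hP

lemma aux_con {T : Type*} [TopologicalSpace T] [IrreducibleSpace T] {s : Set T}
    (hs : Topology.IsConstructible s) :
    ∃ U : Set T, IsOpen U ∧ U.Nonempty ∧ (U ⊆ s ∨ U ⊆ sᶜ) := by
  induction hs using Topology.IsConstructible.empty_union_induction with
  | open_retrocompact U hU _ =>
    rcases U.eq_empty_or_nonempty with rfl | h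
    · exact ⟨Set.univ, isOpen_univ, Set.univ_nonempty, by simp⟩
    · exact ⟨U, hU, h, .inl le_rfl⟩
  | union s hs t ht ihs iht =>
    obtain ⟨U, hU, hU', h⟩ := ihs
    obtain ⟨V, hV, hV', h'⟩ := iht
    refine ⟨U ∩ V, hU.inter hV, nonempty_preirreducible_inter hU hV hU' hV', ?_⟩
    rcases h with h | h
    · left; intro x hx; exact .inl (h hx.1)
    · rcases h' with h' | h'
      · left; intro x hx; exact .inr (h' hx.2)
      · right; intro x hx hx'
        rcases hx' with hx' | hx'
        · exact h hx.1 hx'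
        · exact h' hx.2 hx'
  | compl s hs ih =>
    obtain ⟨U, hU, hU', h⟩ := ih
    exact ⟨U, hU, hU', by rw [compl_compl]; exact h.symm⟩

/-- a dense constructible set contains a nonempty open -/
lemma aux_con' {T : Type*} [TopologicalSpace T] [IrreducibleSpace T] {s : Set T}
    (hs : Topology.IsConstructible s) (hd : Dense s) :
    ∃ U : Set T, IsOpen U ∧ U.Nonempty ∧ U ⊆ s := by
  obtain ⟨U, hU, hU', h | h⟩ := aux_con hs
  · exact ⟨U, hU, hU', h⟩
  · obtain ⟨x, hx, hx'⟩ := hd.inter_open_nonempty U hU hU'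
    exact absurd hx' (h hx)

lemma aux_topdim {T : Type*} [TopologicalSpace T] (d : WithBot ℕ∞) (B : Set (Opens T))
    (hB : ∀ x : T, ∃ U ∈ B, x ∈ U) (h : ∀ U ∈ B, topologicalKrullDim U ≤ d) :
    topologicalKrullDim T ≤ d := by
  rw [topologicalKrullDim, Order.krullDim_eq_iSup_coheight]
  refine iSup_le fun Z => ?_
  obtain ⟨x, hx⟩ := Z.2.nonempty
  obtain ⟨U, hU, hxU⟩ := hB x
  have he := U.isOpen.isOpenEmbedding_subtypeVal
  refine le_trans ?_ (h U hU)
  let e := IrreducibleCloseds.orderIsoOfIsOpenEmbedding _ he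
  let W := e.symm ⟨Z, ⟨x, hxU⟩, hx⟩
  have hW : IrreducibleCloseds.map _ he.continuous W = Z :=
    congrArg Subtype.val (e.apply_symm_apply ⟨Z, ⟨x, hxU⟩, hx⟩)
  rw [← hW, Topology.IsOpenEmbedding.coheight_map he W]
  exact Order.coheight_le_krullDim W


lemma aux_f_gen {X Y : Scheme.{u}} [IsIntegral X] [IsIntegral Y] (f : X ⟶ Y) [IsDominant f] :
    f (genericPoint X) = genericPoint Y := by
  apply ((genericPoint_spec Y).eq _).symm
  have := (genericPoint_spec X).image f.continuous
  rwa [Set.image_univ, f.denseRange.closure_range] at this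

lemma le_pre_top {X S : Scheme.{u}} (p : X ⟶ S) (U : X.Opens) : U ≤ p ⁻¹ᵁ ⊤ := le_top

/-- The structure map on sections. -/
noncomputable def phi {k : Type u} [Field k] {X : Scheme.{u}} (p : X ⟶ Spec (CommRingCat.of k))
    (U : X.Opens) : k →+* Γ(X, U) :=
  ((Scheme.ΓSpecIso (CommRingCat.of k)).inv ≫ p.appLE ⊤ U (le_pre_top p U)).hom

lemma phi_finiteType {k : Type u} [Field k] {X : Scheme.{u}} (p : X ⟶ Spec (CommRingCat.of k))
    [LocallyOfFiniteType p] (U : X.Opens) (hU : IsAffineOpen U) : (phi p U).FiniteType := by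
  have h := p.finiteType_appLE (isAffineOpen_top _) hU (le_pre_top p U)
  refine h.comp ?_
  exact RingHom.FiniteType.of_surjective _
    (Scheme.ΓSpecIso (CommRingCat.of k)).symm.commRingCatIsoToRingEquiv.surjective

lemma germ_phi {k : Type u} [Field k] {X : Scheme.{u}} [IrreducibleSpace X]
    (p : X ⟶ Spec (CommRingCat.of k)) (U : X.Opens) [Nonempty U] :
    (X.germToFunctionField U).hom.comp (phi p U) = (constMap p).hom := by
  rw [phi, constMap, ← CommRingCat.hom_comp]
  congr 1
  rw [Category.assoc, Scheme.Hom.appLE, Category.assoc]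
  congr 2
  exact X.presheaf.germ_res (homOfLE (le_pre_top p U)) _ _

lemma aux_affine_dim {X : Scheme.{u}} (U : X.Opens) (hU : IsAffineOpen U) :
    topologicalKrullDim U = ringKrullDim Γ(X, U) := by
  rw [← PrimeSpectrum.topologicalKrullDim_eq_ringKrullDim]
  exact IsHomeomorph.topologicalKrullDim_eq _ (Scheme.homeoOfIso hU.isoSpec).isHomeomorph

lemma aux_scheme_dim {k : Type u} [Field k] {X : Scheme.{u}} [IsIntegral X]
    (p : X ⟶ Spec (CommRingCat.of k)) [LocallyOfFiniteType p] :
    ∃ n : ℕ, topologicalKrullDim X = n ∧ ∀ U : X.Opens, IsAffineOpen U → Nonempty U →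
      @Algebra.trdeg k Γ(X, U) _ _ (phi p U).toAlgebra = n := by
  let := (constMap p).hom.toAlgebra
  have key : ∀ U : X.Opens, IsAffineOpen U → Nonempty U →
      ∃ n : ℕ, @Algebra.trdeg k Γ(X, U) _ _ (phi p U).toAlgebra = n ∧
        topologicalKrullDim U = n ∧ Algebra.trdeg k X.functionField = n := by
    intro U hU hne
    let := (phi p U).toAlgebra
    have : Algebra.FiniteType k Γ(X, U) := phi_finiteType p U hU
    obtain ⟨n, h1, h2⟩ := aux_dim_trdeg k Γ(X, U)
    refine ⟨n, h1, (aux_affine_dim U hU).trans h2, ?_⟩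
    have := functionField_isFractionRing_of_isAffineOpen X U hU
    have : IsScalarTower k Γ(X, U) X.functionField :=
      IsScalarTower.of_algebraMap_eq' (germ_phi p U).symm
    have : FaithfulSMul Γ(X, U) X.functionField :=
      (faithfulSMul_iff_algebraMap_injective _ _).mpr (IsFractionRing.injective _ _)
    have : Algebra.IsAlgebraic Γ(X, U) X.functionField :=
      IsLocalization.isAlgebraic _ (nonZeroDivisors Γ(X, U))
    rw [← trdeg_add_eq k Γ(X, U) (A := X.functionField), trdeg_eq_zero (R := Γ(X, U)), h1, add_zero]
  have cov : ∀ x : X, ∃ U : X.Opens, IsAffineOpen U ∧ x ∈ U := by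
    intro x
    obtain ⟨_, ⟨U, hU, rfl⟩, hx, -⟩ :=
      X.isBasis_affineOpens.exists_subset_of_mem_open (Set.mem_univ x) isOpen_univ
    exact ⟨U, hU, hx⟩
  obtain ⟨U₀, hU₀, hx₀⟩ := cov (genericPoint X)
  obtain ⟨n, -, h2, h3⟩ := key U₀ hU₀ ⟨_, hx₀⟩
  have key' : ∀ U : X.Opens, IsAffineOpen U → Nonempty U →
      @Algebra.trdeg k Γ(X, U) _ _ (phi p U).toAlgebra = n ∧ topologicalKrullDim U = n := by
    intro U hU hne
    obtain ⟨m, h1', h2', h3'⟩ := key U hU hne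
    have : m = n := by
      rw [h3] at h3'
      exact_mod_cast h3'.symm
    subst this
    exact ⟨h1', h2'⟩
  refine ⟨n, le_antisymm ?_ ?_, fun U hU hne => (key' U hU hne).1⟩
  · refine aux_topdim _ {U : X.Opens | IsAffineOpen U ∧ Nonempty U} ?_
      fun U hU => (key' U hU.1 hU.2).2.le
    intro x
    obtain ⟨U, hU, hx⟩ := cov x
    exact ⟨U, ⟨hU, ⟨_, hx⟩⟩, hx⟩
  · rw [← h2]
    exact topologicalKrullDim_subspace_le X (U₀ : Set X)

lemma aux_prime_gen {X : Scheme.{u}} [IsIntegral X] {U : X.Opens} (hU : IsAffineOpen U)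
    (h : genericPoint X ∈ U) : (hU.primeIdealOf ⟨genericPoint X, h⟩).asIdeal = ⊥ := by
  have : Nonempty U := ⟨_, h⟩
  rw [hU.primeIdealOf_genericPoint, genericPoint_eq_bot_of_affine]
  rfl

lemma aux_point {k : Type u} [Field k]
    {X Y : Scheme.{u}} (p : X ⟶ Spec (CommRingCat.of k)) (q : Y ⟶ Spec (CommRingCat.of k))
    [IsIntegral X] [IsIntegral Y] [LocallyOfFiniteType p] [LocallyOfFiniteType q]
    (hdim : topologicalKrullDim ↥X = topologicalKrullDim ↥Y)
    (f : X ⟶ Y) (hf : f ≫ q = p) [IsDominant f] (z : X) (hz : f z = genericPoint Y) :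
    z = genericPoint X := by
  obtain ⟨_, ⟨V, hV, rfl⟩, hzV, -⟩ :=
    Y.isBasis_affineOpens.exists_subset_of_mem_open (Set.mem_univ (f z)) isOpen_univ
  obtain ⟨_, ⟨U, hU, rfl⟩, hzU, hUV⟩ :=
    X.isBasis_affineOpens.exists_subset_of_mem_open (a := z) hzV (f ⁻¹ᵁ V).isOpen
  replace hUV : U ≤ f ⁻¹ᵁ V := hUV
  have hneU : Nonempty U := ⟨_, hzU⟩
  have hneV : Nonempty V := ⟨_, hzV⟩
  have hgU : genericPoint X ∈ U :=
    ((genericPoint_spec X).mem_open_set_iff U.isOpen).mpr ⟨z, trivial, hzU⟩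
  have hgV : genericPoint Y ∈ V := hz ▸ hzV
  obtain ⟨n, hn, hn'⟩ := aux_scheme_dim p
  obtain ⟨m, hm, hm'⟩ := aux_scheme_dim q
  have hnm : m = n := by
    rw [hn, hm] at hdim
    exact_mod_cast hdim.symm
  subst hnm
  have tB := hn' U hU hneU
  have tA := hm' V hV hneV
  let := (phi p U).toAlgebra
  let := (phi q V).toAlgebra
  let := (f.appLE V U hUV).hom.toAlgebra
  have : IsScalarTower k Γ(Y, V) Γ(X, U) := by
    refine IsScalarTower.of_algebraMap_eq' ?_
    change phi p U = (f.appLE V U hUV).hom.comp (phi q V)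
    subst hf
    rw [phi, phi, ← CommRingCat.hom_comp, Category.assoc, Scheme.Hom.appLE_comp_appLE]
  have hcz : ∀ (w : X) (hw : w ∈ U), f w = genericPoint Y →
      Ideal.comap (algebraMap Γ(Y, V) Γ(X, U)) (hU.primeIdealOf ⟨w, hw⟩).asIdeal = ⊥ := by
    intro w hw hfw
    have h := congrArg PrimeSpectrum.asIdeal
      (IsAffineOpen.comap_primeIdealOf_appLE (f := f) V hV U hU hUV hw)
    refine h.trans ?_
    rw [← aux_prime_gen hV hgV]
    congr 3
  have : FaithfulSMul Γ(Y, V) Γ(X, U) := by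
    rw [faithfulSMul_iff_algebraMap_injective, RingHom.injective_iff_ker_eq_bot,
      RingHom.ker_eq_comap_bot, ← aux_prime_gen hU hgU]
    exact hcz _ hgU (aux_f_gen f)
  have hP := aux_prime k Γ(Y, V) Γ(X, U) m tA tB _ (hcz z hzU hz)
  rw [← aux_prime_gen hU hgU] at hP
  have := PrimeSpectrum.ext hP
  have h2 := congrArg hU.fromSpec this
  rwa [hU.fromSpec_primeIdealOf, hU.fromSpec_primeIdealOf] at h2

/-- The permutation of points. -/
noncomputable def perm {X : Scheme.{u}} (σ : X ≅ X) : Equiv.Perm X :=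
  (Scheme.homeoOfIso σ).toEquiv

lemma perm_apply {X : Scheme.{u}} (σ : X ≅ X) (x : X) : perm σ x = σ.hom x := rfl

lemma perm_inv_apply {X : Scheme.{u}} (σ : X ≅ X) (x : X) : (perm σ)⁻¹ x = σ.inv x := rfl

lemma iter_eq {X : Scheme.{u}} (σ : X ≅ X) (n : ℤ) : iter σ n = ⇑(perm σ ^ n) := by
  cases n with
  | ofNat n =>
    rw [Int.ofNat_eq_natCast, zpow_natCast, ← Equiv.Perm.iterate_eq_pow]
    rfl
  | negSucc n =>
    rw [zpow_negSucc, ← inv_pow, ← Equiv.Perm.iterate_eq_pow]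
    rfl

lemma iter_continuous {X : Scheme.{u}} (σ : X ≅ X) (n : ℤ) : Continuous (iter σ n) := by
  cases n with
  | ofNat n => exact σ.hom.continuous.iterate n
  | negSucc n => exact σ.inv.continuous.iterate (n + 1)

lemma iter_comm {X Y : Scheme.{u}} (f : X ⟶ Y) (σ : X ≅ X) (τ : Y ≅ Y)
    (hcomm : σ.hom ≫ f = f ≫ τ.hom) (n : ℤ) (x : X) : f (iter σ n x) = iter τ n (f x) := by
  have hinv : σ.inv ≫ f = f ≫ τ.inv := by
    rw [Iso.inv_comp_eq, ← Category.assoc, hcomm, Category.assoc, Iso.hom_inv_id, Category.comp_id]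
  cases n with
  | ofNat n =>
    refine Function.Semiconj.iterate_right (f := f) (fun y => ?_) n x
    change (σ.hom ≫ f) y = (f ≫ τ.hom) y
    rw [hcomm]
  | negSucc n =>
    refine Function.Semiconj.iterate_right (f := f) (fun y => ?_) (n + 1) x
    change (σ.inv ≫ f) y = (f ≫ τ.inv) y
    rw [hinv]

lemma orbit_iter {X : Scheme.{u}} (σ : X ≅ X) (n : ℤ) (x : X) :
    orbit σ (iter σ n x) = orbit σ x := by
  ext y
  simp only [orbit, Set.mem_range, iter_eq, ← Equiv.Perm.mul_apply, ← zpow_add]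
  constructor
  · rintro ⟨m, rfl⟩
    exact ⟨m + n, rfl⟩
  · rintro ⟨m, rfl⟩
    exact ⟨m - n, by simp⟩

lemma image_orbit {X Y : Scheme.{u}} (f : X ⟶ Y) (σ : X ≅ X) (τ : Y ≅ Y)
    (hcomm : σ.hom ≫ f = f ≫ τ.hom) (x : X) : f '' orbit σ x = orbit τ (f x) := by
  rw [orbit, orbit, ← Set.range_comp]
  exact congrArg Set.range (funext fun n => iter_comm f σ τ hcomm n x)

lemma gen_dense {X : Scheme.{u}} [IsIntegral X] (s : Set X) (h : genericPoint X ∈ s) :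
    Dense s := by
  have h1 := (dense_iff_closure_eq (s := {genericPoint X})).mpr (genericPoint_spec X)
  exact h1.mono (Set.singleton_subset_iff.mpr h)

lemma iter_zero_mem {X : Scheme.{u}} (σ : X ≅ X) (x : X) : x ∈ orbit σ x := ⟨0, rfl⟩

lemma gen_mem {X : Scheme.{u}} [IsIntegral X] {U : Set X} (hU : IsOpen U) (h : U.Nonempty) :
    genericPoint X ∈ U :=
  ((genericPoint_spec X).mem_open_set_iff hU).mpr (by simpa using h)

/-- Lemma 7.3 of the paper. Good dense orbits transfer along a dominant
morphism of integral `k`-schemes of the same dimension intertwining the automorphisms. -/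
theorem statement12 (k : Type u) [Field k] [IsAlgClosed k] [Uncountable k]
    (X Y : Scheme.{u}) (p : X ⟶ Spec (CommRingCat.of k)) (q : Y ⟶ Spec (CommRingCat.of k))
    [IsIntegral X] [IsIntegral Y]
    [LocallyOfFiniteType p] [QuasiCompact p] [LocallyOfFiniteType q] [QuasiCompact q]
    (hdim : topologicalKrullDim ↥X = topologicalKrullDim ↥Y)
    (f : X ⟶ Y) (hf : f ≫ q = p) [IsDominant f]
    (σ : X ≅ X) (τ : Y ≅ Y) (hσ : σ.hom ≫ p = p) (hτ : τ.hom ≫ q = q)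
    (hcomm : σ.hom ≫ f = f ≫ τ.hom) :
    GoodDenseOrbits σ ↔ GoodDenseOrbits τ := by
  have hcX : CompactSpace X := (quasiCompact_iff_compactSpace p).mp inferInstance
  have hcY : CompactSpace Y := (quasiCompact_iff_compactSpace q).mp inferInstance
  have hnX : IsLocallyNoetherian X := LocallyOfFiniteType.isLocallyNoetherian p
  have hnY : IsLocallyNoetherian Y := LocallyOfFiniteType.isLocallyNoetherian q
  have : IsNoetherian X := {}
  have : IsNoetherian Y := {}
  have : LocallyOfFiniteType (f ≫ q) := by rw [hf]; infer_instance
  have : LocallyOfFiniteType f := locallyOfFiniteType_of_comp f q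
  have conX : ∀ s : Set X, IsOpen s → Topology.IsConstructible s := fun s hs =>
    BooleanSubalgebra.subset_closure ⟨hs, fun t _ _ => NoetherianSpace.isCompact _⟩
  have chev : ∀ s : Set X, Topology.IsConstructible s → Topology.IsConstructible (f '' s) :=
    fun s hs => f.isConstructible_image hs
  have key : ∀ x : X, Dense (orbit σ x) ↔ Dense (orbit τ (f x)) := by
    intro x
    rw [← image_orbit f σ τ hcomm]
    constructor
    · intro h
      exact f.denseRange.dense_image f.continuous h
    · intro h
      have hd : Dense (f '' closure (orbit σ x)) := h.mono (Set.image_mono subset_closure)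
      have hc : Topology.IsConstructible (closure (orbit σ x)) := by
        have := (conX _ (isClosed_closure (s := orbit σ x)).isOpen_compl).compl
        rwa [compl_compl] at this
      obtain ⟨V, hV, hVne, hVs⟩ := aux_con' (chev _ hc) hd
      obtain ⟨z, hz, hfz⟩ := hVs (gen_mem hV hVne)
      have := aux_point p q hdim f hf z hfz
      subst this
      exact dense_closure.mp (gen_dense _ hz)
  constructor
  · intro h
    have hg : genericPoint X ∈ {x : X | Dense (orbit σ x)} := gen_dense _ (iter_zero_mem _ _)
    have hd : Dense (f '' {x : X | Dense (orbit σ x)}) :=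
      gen_dense _ ⟨_, hg, aux_f_gen f⟩
    obtain ⟨V, hV, hVne, hVs⟩ := aux_con' (chev _ (conX _ h)) hd
    have hVD : ∀ y ∈ V, Dense (orbit τ y) := by
      intro y hy
      obtain ⟨x, hx, rfl⟩ := hVs hy
      exact (key x).mp hx
    have : {y : Y | Dense (orbit τ y)} = ⋃ n : ℤ, iter τ n ⁻¹' V := by
      ext y
      simp only [Set.mem_ofPred_eq, Set.mem_iUnion, Set.mem_preimage]
      constructor
      · intro hy
        obtain ⟨_, h1, n, rfl⟩ := hy.inter_open_nonempty V hV hVne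
        exact ⟨n, h1⟩
      · rintro ⟨n, hn⟩
        rw [← orbit_iter τ n]
        exact hVD _ hn
    rw [GoodDenseOrbits, this]
    exact isOpen_iUnion fun n => hV.preimage (iter_continuous τ n)
  · intro h
    have : {x : X | Dense (orbit σ x)} = f ⁻¹' {y : Y | Dense (orbit τ y)} := by
      ext x
      exact key x
    rw [GoodDenseOrbits, this]
    exact IsOpen.preimage f.continuous h

end ThcrDM
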